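/- arXiv:2602.10857 — 3 statements merged into one kernel-verified Lean document; each statement's English description precedes it below -/
import Mathlib

section
/- Fix q ≥ 0 with q ≠ 1. The stationary distribution corresponding to a rate function u in the PALRMP is factorised if and only if there exists φ : ℕ → ℝ_{>0} such that u(m,n) = φ(n) for all m ≥ 1, n ≥ 0 (and u(0,n) = 0). In that case the one-point function f(x,n) = x^n ∏_{i=1}^{n} φ(i−1) works. -/
open scoped Classical

namespace LRMP

/-- A rate function: `u m n` is positive when the departure site is occupied
(`m ≥ 1`) and zero when it is empty (`m = 0`). -/
def IsRate (u : ℕ → ℕ → ℝ) : Prop :=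
  (∀ m n : ℕ, 1 ≤ m → 0 < u m n) ∧ ∀ n : ℕ, u 0 n = 0

/-- The configuration `η^{k,ℓ}`: one particle moved from site `k` to site `ℓ`. -/
def move (L : ℕ) (η : ZMod L → ℕ) (k ℓ : ZMod L) : ZMod L → ℕ :=
  fun a => if a = k then η a - 1 else if a = ℓ then η a + 1 else η a

/-- Every site strictly between `k` and `ℓ`, moving clockwise from `k`, is empty in `η`. -/
def RightClear (L : ℕ) (η : ZMod L → ℕ) (k ℓ : ZMod L) : Prop :=
  ∀ i : ℕ, 0 < i → i < (ℓ - k).val → η (k + (i : ZMod L)) = 0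

/-- Every site strictly between `k` and `ℓ`, moving counterclockwise from `k`, is empty in `η`. -/
def LeftClear (L : ℕ) (η : ZMod L → ℕ) (k ℓ : ZMod L) : Prop :=
  ∀ i : ℕ, 0 < i → i < (k - ℓ).val → η (k - (i : ZMod L)) = 0

/-- The total rate of the transition `η → η^{k,ℓ}` in the PALRMP with rate function `u`,
rate parameters `x` and asymmetry parameter `q`: a clockwise (right) hop contributes
`x ℓ * u (η k) (η ℓ)` and a counterclockwise (left) hop contributes `q * x ℓ * u (η k) (η ℓ)`. -/
noncomputable def hopRate (L : ℕ) (u : ℕ → ℕ → ℝ) (x : ZMod L → ℝ) (q : ℝ)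
    (η : ZMod L → ℕ) (k ℓ : ZMod L) : ℝ :=
  (if k ≠ ℓ ∧ 1 ≤ η k ∧ RightClear L η k ℓ then x ℓ * u (η k) (η ℓ) else 0) +
  (if k ≠ ℓ ∧ 1 ≤ η k ∧ LeftClear L η k ℓ then q * (x ℓ * u (η k) (η ℓ)) else 0)

/-- The incoming probability current into `η`: the sum over pairs `(k, ℓ)` of the
probability current due to the transition into `η` in which a particle moves from
site `k` to site `ℓ` (coming from the configuration `η^{ℓ,k} = move L η ℓ k`). -/
noncomputable def inflow (L : ℕ) [NeZero L] (u : ℕ → ℕ → ℝ) (x : ZMod L → ℝ) (q : ℝ)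
    (π : (ZMod L → ℕ) → ℝ) (η : ZMod L → ℕ) : ℝ :=
  ∑ k : ZMod L, ∑ ℓ : ZMod L,
    if 1 ≤ η ℓ then π (move L η ℓ k) * hopRate L u x q (move L η ℓ k) k ℓ else 0

/-- The outgoing probability current out of `η`. -/
noncomputable def outflow (L : ℕ) [NeZero L] (u : ℕ → ℕ → ℝ) (x : ZMod L → ℝ) (q : ℝ)
    (π : (ZMod L → ℕ) → ℝ) (η : ZMod L → ℕ) : ℝ :=
  ∑ k : ZMod L, ∑ ℓ : ZMod L, π η * hopRate L u x q η k ℓ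

/-- `π` satisfies the master (balance) equation of the PALRMP on `Ω_{L,N}`:
for every configuration `η` with `N` particles, the incoming probability current
equals the outgoing probability current. -/
def IsStationary (L : ℕ) [NeZero L] (N : ℕ) (u : ℕ → ℕ → ℝ) (x : ZMod L → ℝ) (q : ℝ)
    (π : (ZMod L → ℕ) → ℝ) : Prop :=
  ∀ η : ZMod L → ℕ, (∑ a, η a) = N → inflow L u x q π η = outflow L u x q π η

/-- The stationary distribution corresponding to the rate `u` in the PALRMP with
asymmetry parameter `q` is factorised, with one-point function `f`: for every
`L ≥ 2`, `N ≥ 1` and all positive rate parameters `x`, the factorised distribution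
`η ↦ ∏_ℓ f (x ℓ) (η ℓ)` (up to normalisation) is stationary. -/
def FactorisedPALRMP (u : ℕ → ℕ → ℝ) (q : ℝ) (f : ℝ → ℕ → ℝ) : Prop :=
  (∀ (x : ℝ) (n : ℕ), 0 < x → 0 < f x n) ∧
  ∀ (L N : ℕ) [NeZero L], 2 ≤ L → 1 ≤ N →
    ∀ x : ZMod L → ℝ, (∀ ℓ, 0 < x ℓ) →
      IsStationary L N u x q (fun η => ∏ ℓ, f (x ℓ) (η ℓ))

/-- The stationary distribution corresponding to the rate `u` in the homogeneous
PALRMP (all rate parameters equal to `1`) with asymmetry parameter `q` is factorised,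
with one-point function `f`. -/
def FactorisedHomog (u : ℕ → ℕ → ℝ) (q : ℝ) (f : ℕ → ℝ) : Prop :=
  (∀ n : ℕ, 0 < f n) ∧
  ∀ (L N : ℕ) [NeZero L], 2 ≤ L → 1 ≤ N →
    IsStationary L N u (fun _ => (1 : ℝ)) q (fun η => ∏ ℓ, f (η ℓ))

end LRMP

namespace LRMP

/-!
A particle can hop clockwise from `ℓ` to `k` exactly when it can hop counterclockwise from `k` to
`ℓ`. If the factorised weight balances the exchange of one particle between any two sites, then
inflow minus outflow at `η` is therefore `π η * (1 - q) * ∑ k, x k * (c k - c' k)`, where `c k` and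
`c' k` are the values `u (η ℓ) (η k)` for `ℓ` the nearest occupied site clockwise, respectively
counterclockwise, of `k`. When `u` ignores its first argument, `c = c'` and the weight is
stationary.

Conversely, stationarity on two sites forces the exchange balance, by induction on the occupation
of one of the sites. Varying the parameters `x` then gives `c = c'`, and on three sites with
occupations `n, m, m'` the equality at the first site reads `u m n = u m' n`.
-/

lemma existsUnique_forall_lt_not {ι α : Type*} [LinearOrder α] [WellFoundedLT α] {g : ι → α}
    (hg : Function.Injective g) {p : ι → Prop} (h : ∃ i, p i) :
    ∃! i, p i ∧ ∀ j, g j < g i → ¬ p j := by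
  obtain ⟨i, hi, hmin⟩ := (InvImage.wf g wellFounded_lt).has_min {i | p i} h
  refine ⟨i, ⟨hi, fun j hlt hj => hmin j hj hlt⟩, fun i' ⟨hi', hmin'⟩ => hg ?_⟩
  exact le_antisymm (not_lt.1 fun hlt => hmin' i hlt hi) (not_lt.1 (hmin i' hi'))

section NearestOccupied

variable {L : ℕ}

lemma leftClear_iff_rightClear_neg (η : ZMod L → ℕ) (k ℓ : ZMod L) :
    LeftClear L η k ℓ ↔ RightClear L (fun a => η (-a)) (-k) (-ℓ) := by
  have hneg (i : ℕ) : -(-k + (i : ZMod L)) = k - i := by ring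
  simp only [LeftClear, RightClear, hneg, neg_sub_neg]

/-- `ℓ` is the nearest occupied site met when moving clockwise from `k`, not counting `k`. -/
def IsNextOccupied (η : ZMod L → ℕ) (k ℓ : ZMod L) : Prop :=
  k ≠ ℓ ∧ 1 ≤ η ℓ ∧ RightClear L η k ℓ

/-- The counterclockwise analogue of `IsNextOccupied`. -/
def IsPrevOccupied (η : ZMod L → ℕ) (k ℓ : ZMod L) : Prop :=
  k ≠ ℓ ∧ 1 ≤ η ℓ ∧ LeftClear L η k ℓ

lemma isPrevOccupied_iff_isNextOccupied_neg (η : ZMod L → ℕ) (k ℓ : ZMod L) :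
    IsPrevOccupied η k ℓ ↔ IsNextOccupied (fun a => η (-a)) (-k) (-ℓ) := by
  simp only [IsPrevOccupied, IsNextOccupied, leftClear_iff_rightClear_neg, ne_eq, neg_inj, neg_neg]

variable [NeZero L]

lemma rightClear_iff_forall_val_lt (η : ZMod L → ℕ) (k ℓ : ZMod L) :
    RightClear L η k ℓ ↔ ∀ j, j ≠ k → (j - k).val < (ℓ - k).val → η j = 0 := by
  constructor
  · intro h j hj hlt
    simpa using h (j - k).val (ZMod.val_pos.2 (sub_ne_zero.2 hj)) hlt
  · intro h i hi hlt
    have hval : (i : ZMod L).val = i := ZMod.val_natCast_of_lt (hlt.trans (ZMod.val_lt _))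
    have hi0 : (i : ZMod L) ≠ 0 := ZMod.val_pos.1 (by rwa [hval])
    exact h _ (by simpa using hi0) (by simpa [hval] using hlt)

lemma leftClear_of_rightClear {η : ZMod L → ℕ} {k ℓ : ZMod L} (h : RightClear L η ℓ k) :
    LeftClear L η k ℓ := by
  intro i hi hlt
  have hclear := h ((k - ℓ).val - i) (by lia) (by lia)
  rwa [Nat.cast_sub hlt.le, ZMod.natCast_zmod_val, ← add_sub_assoc, add_sub_cancel] at hclear

lemma rightClear_iff_leftClear (η : ZMod L → ℕ) (k ℓ : ZMod L) :
    RightClear L η ℓ k ↔ LeftClear L η k ℓ := by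
  refine ⟨leftClear_of_rightClear, fun h => ?_⟩
  rw [leftClear_iff_rightClear_neg] at h
  simpa [leftClear_iff_rightClear_neg] using leftClear_of_rightClear h

lemma existsUnique_isNextOccupied {η : ZMod L → ℕ} {k : ZMod L} (h : ∃ ℓ, k ≠ ℓ ∧ 1 ≤ η ℓ) :
    ∃! ℓ, IsNextOccupied η k ℓ := by
  have hinj : Function.Injective fun ℓ : ZMod L => (ℓ - k).val :=
    (ZMod.val_injective L).comp sub_left_injective
  refine (existsUnique_congr fun ℓ => ?_).1 (existsUnique_forall_lt_not hinj h)
  simp only [IsNextOccupied, rightClear_iff_forall_val_lt]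
  grind

lemma existsUnique_isPrevOccupied {η : ZMod L → ℕ} {k : ZMod L} (h : ∃ ℓ, k ≠ ℓ ∧ 1 ≤ η ℓ) :
    ∃! ℓ, IsPrevOccupied η k ℓ := by
  simp only [isPrevOccupied_iff_isNextOccupied_neg]
  obtain ⟨ℓ, hkℓ, hℓ⟩ := h
  rw [(Equiv.neg (ZMod L)).existsUnique_congr_left]
  simpa using existsUnique_isNextOccupied (η := fun a => η (-a)) ⟨-ℓ, by simpa using hkℓ, by simpa⟩

/-- The rate `u (η ℓ) (η k)`, without its parameter `x k`, at which the nearest occupied site `ℓ`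
clockwise of `k` sends a particle to `k`; it is `0` if every site other than `k` is empty. -/
noncomputable def nextWeight (u : ℕ → ℕ → ℝ) (η : ZMod L → ℕ) (k : ZMod L) : ℝ :=
  ∑ ℓ, if IsNextOccupied η k ℓ then u (η ℓ) (η k) else 0

/-- The counterclockwise analogue of `nextWeight`. -/
noncomputable def prevWeight (u : ℕ → ℕ → ℝ) (η : ZMod L → ℕ) (k : ZMod L) : ℝ :=
  ∑ ℓ, if IsPrevOccupied η k ℓ then u (η ℓ) (η k) else 0

variable {u : ℕ → ℕ → ℝ} {η : ZMod L → ℕ} {k ℓ : ZMod L}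

lemma IsNextOccupied.nextWeight_eq (h : IsNextOccupied η k ℓ) :
    nextWeight u η k = u (η ℓ) (η k) := by
  have huniq := existsUnique_isNextOccupied ⟨ℓ, h.1, h.2.1⟩
  rw [nextWeight, Fintype.sum_eq_single ℓ fun j hj => if_neg fun hnext => hj (huniq.unique hnext h),
    if_pos h]

lemma IsPrevOccupied.prevWeight_eq (h : IsPrevOccupied η k ℓ) :
    prevWeight u η k = u (η ℓ) (η k) := by
  have huniq := existsUnique_isPrevOccupied ⟨ℓ, h.1, h.2.1⟩
  rw [prevWeight, Fintype.sum_eq_single ℓ fun j hj => if_neg fun hprev => hj (huniq.unique hprev h),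
    if_pos h]

lemma nextWeight_eq_prevWeight_of_rate_eq {φ : ℕ → ℝ} (hu : ∀ m n, 1 ≤ m → u m n = φ n)
    (η : ZMod L → ℕ) (k : ZMod L) : nextWeight u η k = prevWeight u η k := by
  by_cases h : ∃ ℓ, k ≠ ℓ ∧ 1 ≤ η ℓ
  · obtain ⟨r, hr, -⟩ := existsUnique_isNextOccupied h
    obtain ⟨l, hl, -⟩ := existsUnique_isPrevOccupied h
    rw [hr.nextWeight_eq, hl.prevWeight_eq, hu _ _ hr.2.1, hu _ _ hl.2.1]
  · have hnext (ℓ : ZMod L) : ¬ IsNextOccupied η k ℓ := fun hℓ => h ⟨ℓ, hℓ.1, hℓ.2.1⟩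
    have hprev (ℓ : ZMod L) : ¬ IsPrevOccupied η k ℓ := fun hℓ => h ⟨ℓ, hℓ.1, hℓ.2.1⟩
    simp only [nextWeight, prevWeight, hnext, hprev, if_false]

end NearestOccupied

/-- The net current from a site with parameter `x` to a site with parameter `y` in the factorised
weight `f`, when one particle is exchanged on top of `m` and `n` particles already there. -/
noncomputable def bondCurrent (u : ℕ → ℕ → ℝ) (f : ℝ → ℕ → ℝ) (x y : ℝ) (m n : ℕ) : ℝ :=
  f x (m + 1) * f y n * (y * u (m + 1) n) - f x m * f y (n + 1) * (x * u (n + 1) m)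

/-- Detailed balance between pairs of sites. The hop of weight `1` in one direction is balanced
against the hop of weight `1` in the opposite direction, so that `q` does not enter. -/
def ExchangeBalance (u : ℕ → ℕ → ℝ) (f : ℝ → ℕ → ℝ) : Prop :=
  ∀ x y, 0 < x → 0 < y → ∀ m n, bondCurrent u f x y m n = 0

section Currents

variable {L : ℕ} {u : ℕ → ℕ → ℝ} {f : ℝ → ℕ → ℝ} {x : ZMod L → ℝ} {η : ZMod L → ℕ} {k ℓ : ZMod L}

lemma move_apply_source (η : ZMod L → ℕ) (k ℓ : ZMod L) : move L η k ℓ k = η k - 1 := by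
  simp [move]

lemma move_apply_target (η : ZMod L → ℕ) (h : ℓ ≠ k) : move L η k ℓ ℓ = η ℓ + 1 := by
  simp [move, h]

lemma move_apply_of_ne {a : ZMod L} (η : ZMod L → ℕ) (hk : a ≠ k) (hℓ : a ≠ ℓ) :
    move L η k ℓ a = η a := by
  simp [move, hk, hℓ]

variable [NeZero L]

lemma rightClear_move (η : ZMod L → ℕ) (k ℓ : ZMod L) :
    RightClear L (move L η ℓ k) k ℓ ↔ RightClear L η k ℓ := by
  simp only [rightClear_iff_forall_val_lt]
  refine forall₃_congr fun j hjk hlt => ?_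
  rw [move_apply_of_ne η (ne_of_apply_ne (fun a => (a - k).val) hlt.ne) hjk]

lemma leftClear_move (η : ZMod L → ℕ) (k ℓ : ZMod L) :
    LeftClear L (move L η ℓ k) k ℓ ↔ LeftClear L η k ℓ := by
  have hmove : (fun a => move L η ℓ k (-a)) = move L (fun a => η (-a)) (-ℓ) (-k) := by
    ext a
    simp only [move, neg_eq_iff_eq_neg]
  rw [leftClear_iff_rightClear_neg, hmove, rightClear_move, ← leftClear_iff_rightClear_neg]

lemma ExchangeBalance.prod_move_mul (hf : ExchangeBalance u f) (hx : ∀ a, 0 < x a) (h : k ≠ ℓ)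
    (hℓ : 1 ≤ η ℓ) :
    (∏ a, f (x a) (move L η ℓ k a)) * (x ℓ * u (move L η ℓ k k) (move L η ℓ k ℓ)) =
      (∏ a, f (x a) (η a)) * (x k * u (η ℓ) (η k)) := by
  have hrest : ∏ a ∈ {k, ℓ}ᶜ, f (x a) (move L η ℓ k a) = ∏ a ∈ {k, ℓ}ᶜ, f (x a) (η a) := by
    refine Finset.prod_congr rfl fun a ha => ?_
    simp only [Finset.mem_compl, Finset.mem_insert, Finset.mem_singleton, not_or] at ha
    rw [move_apply_of_ne η ha.2 ha.1]
  obtain ⟨n, hn⟩ := Nat.exists_eq_add_of_le' hℓ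
  have hbond := hf (x k) (x ℓ) (hx k) (hx ℓ) (η k) n
  rw [bondCurrent] at hbond
  rw [← Finset.prod_mul_prod_compl {k, ℓ}, ← Finset.prod_mul_prod_compl {k, ℓ}, hrest,
    Finset.prod_pair h, Finset.prod_pair h, move_apply_target η h, move_apply_source, hn,
    Nat.add_sub_cancel]
  linear_combination (∏ a ∈ {k, ℓ}ᶜ, f (x a) (η a)) * hbond

lemma outflow_eq (u : ℕ → ℕ → ℝ) (x : ZMod L → ℝ) (q : ℝ) (π : (ZMod L → ℕ) → ℝ)
    (η : ZMod L → ℕ) :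
    outflow L u x q π η = π η * ∑ k, x k * (prevWeight u η k + q * nextWeight u η k) := by
  have hrate (k ℓ : ZMod L) : hopRate L u x q η ℓ k =
      x k * ((if IsPrevOccupied η k ℓ then u (η ℓ) (η k) else 0) +
        q * if IsNextOccupied η k ℓ then u (η ℓ) (η k) else 0) := by
    rw [hopRate, rightClear_iff_leftClear, ← rightClear_iff_leftClear η ℓ k]
    grind [IsPrevOccupied, IsNextOccupied]
  rw [outflow, Finset.sum_comm, Finset.mul_sum]
  refine Finset.sum_congr rfl fun k _ => ?_
  simp only [hrate, prevWeight, nextWeight, Finset.mul_sum, Finset.sum_add_distrib, mul_add]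

lemma ExchangeBalance.inflow_eq (hf : ExchangeBalance u f) (hx : ∀ a, 0 < x a) (q : ℝ)
    (η : ZMod L → ℕ) :
    inflow L u x q (fun η => ∏ a, f (x a) (η a)) η =
      (∏ a, f (x a) (η a)) * ∑ k, x k * (nextWeight u η k + q * prevWeight u η k) := by
  have hterm (k ℓ : ZMod L) :
      (if 1 ≤ η ℓ then (∏ a, f (x a) (move L η ℓ k a)) * hopRate L u x q (move L η ℓ k) k ℓ
        else 0) = (∏ a, f (x a) (η a)) * (x k *
          ((if IsNextOccupied η k ℓ then u (η ℓ) (η k) else 0) +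
            q * if IsPrevOccupied η k ℓ then u (η ℓ) (η k) else 0)) := by
    by_cases h : k ≠ ℓ ∧ 1 ≤ η ℓ
    · obtain ⟨hkℓ, hℓ⟩ := h
      have hmove := hf.prod_move_mul hx hkℓ hℓ
      have htarget : 1 ≤ move L η ℓ k k := by simp [move_apply_target η hkℓ]
      simp only [hopRate, IsNextOccupied, IsPrevOccupied, rightClear_move, leftClear_move, hkℓ,
        hℓ, htarget, ne_eq, not_false_eq_true, true_and, if_true]
      split_ifs <;> grind
    · simp only [hopRate, IsNextOccupied, IsPrevOccupied]
      grind
  simp only [inflow, hterm, nextWeight, prevWeight, Finset.mul_sum, Finset.sum_add_distrib,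
    mul_add]

lemma ExchangeBalance.inflow_sub_outflow (hf : ExchangeBalance u f) (hx : ∀ a, 0 < x a) (q : ℝ)
    (η : ZMod L → ℕ) :
    inflow L u x q (fun η => ∏ a, f (x a) (η a)) η -
        outflow L u x q (fun η => ∏ a, f (x a) (η a)) η =
      (∏ a, f (x a) (η a)) * ((1 - q) * ∑ k, x k * (nextWeight u η k - prevWeight u η k)) := by
  rw [hf.inflow_eq hx, outflow_eq, ← mul_sub, ← Finset.sum_sub_distrib, Finset.mul_sum (a := 1 - q)]
  congr! 2
  ring

end Currents

lemma exchangeBalance_pow_mul_prod {u : ℕ → ℕ → ℝ} {φ : ℕ → ℝ}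
    (hu : ∀ m n, 1 ≤ m → u m n = φ n) :
    ExchangeBalance u fun x n => x ^ n * ∏ i ∈ Finset.range n, φ i := by
  intro x y _ _ m n
  simp only [bondCurrent, hu _ _ (Nat.le_add_left 1 _), Finset.prod_range_succ]
  ring

lemma factorisedPALRMP_pow_mul_prod (q : ℝ) {u : ℕ → ℕ → ℝ} {φ : ℕ → ℝ} (hφ : ∀ n, 0 < φ n)
    (hu : ∀ m n, 1 ≤ m → u m n = φ n) :
    FactorisedPALRMP u q fun x n => x ^ n * ∏ i ∈ Finset.range n, φ i := by
  refine ⟨fun x n hx => mul_pos (pow_pos hx n) (Finset.prod_pos fun i _ => hφ i), ?_⟩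
  intro L N _ _ _ x hx η _
  rw [← sub_eq_zero, (exchangeBalance_pow_mul_prod hu).inflow_sub_outflow hx]
  simp only [nextWeight_eq_prevWeight_of_rate_eq hu, sub_self, mul_zero, Finset.sum_const_zero]

section Necessity

variable {u : ℕ → ℕ → ℝ} {q : ℝ} {f : ℝ → ℕ → ℝ}

@[to_additive]
lemma prod_zmod_two {M : Type*} [CommMonoid M] (F : ZMod 2 → M) : ∏ a, F a = F 0 * F 1 :=
  Fin.prod_univ_two F

lemma rightClear_two (η : ZMod 2 → ℕ) (k ℓ : ZMod 2) : RightClear 2 η k ℓ := by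
  intro i hi hlt
  have := ZMod.val_lt (ℓ - k)
  lia

lemma inflow_sub_outflow_two (u : ℕ → ℕ → ℝ) (q : ℝ) (f : ℝ → ℕ → ℝ) (x : ZMod 2 → ℝ)
    (η : ZMod 2 → ℕ) :
    inflow 2 u x q (fun η => ∏ a, f (x a) (η a)) η -
        outflow 2 u x q (fun η => ∏ a, f (x a) (η a)) η =
      (1 + q) * ((if 1 ≤ η 1 then bondCurrent u f (x 0) (x 1) (η 0) (η 1 - 1) else 0) -
        if 1 ≤ η 0 then bondCurrent u f (x 0) (x 1) (η 0 - 1) (η 1) else 0) := by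
  have hleft (η : ZMod 2 → ℕ) (k ℓ : ZMod 2) : LeftClear 2 η k ℓ :=
    leftClear_of_rightClear (rightClear_two η ℓ k)
  have h01 : (0 : ZMod 2) ≠ 1 := by decide
  simp only [inflow, outflow, hopRate, bondCurrent, sum_zmod_two, prod_zmod_two, rightClear_two,
    hleft, move, h01, h01.symm, ne_eq, not_true_eq_false, not_false_eq_true, true_and, false_and,
    and_true, if_true, if_false, le_add_iff_nonneg_left, zero_le]
  rcases η 0 with _ | a <;> rcases η 1 with _ | b <;>
    simp [-mul_eq_zero, -zero_eq_mul] <;> ring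

lemma FactorisedPALRMP.bondCurrent_two (h : FactorisedPALRMP u q f) (hq : q ≠ -1) {x y : ℝ}
    (hx : 0 < x) (hy : 0 < y) {m n : ℕ} (hmn : 1 ≤ m + n) :
    (if 1 ≤ n then bondCurrent u f x y m (n - 1) else 0) =
      if 1 ≤ m then bondCurrent u f x y (m - 1) n else 0 := by
  have hpos : ∀ a : ZMod 2, 0 < (![x, y] : ZMod 2 → ℝ) a := Fin.forall_fin_two.2 ⟨hx, hy⟩
  have hsum : ∑ a, (![m, n] : ZMod 2 → ℕ) a = m + n := sum_zmod_two _
  have hbalance := sub_eq_zero.2 (h.2 2 (m + n) le_rfl hmn _ hpos _ hsum)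
  have hcurrent := (inflow_sub_outflow_two u q f ![x, y] ![m, n]).symm.trans hbalance
  have hq' : 1 + q ≠ 0 := fun h0 => hq (by linarith)
  exact sub_eq_zero.1 ((mul_eq_zero.1 hcurrent).resolve_left hq')

lemma FactorisedPALRMP.exchangeBalance (h : FactorisedPALRMP u q f) (hq : q ≠ -1) :
    ExchangeBalance u f := by
  intro x y hx hy m
  induction m with
  | zero => exact fun n => by simpa using h.bondCurrent_two hq hx hy (m := 0) (n := n + 1) (by lia)
  | succ m ih =>
    intro n
    have hshift : bondCurrent u f x y (m + 1) n = bondCurrent u f x y m (n + 1) := by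
      simpa using h.bondCurrent_two hq hx hy (m := m + 1) (n := n + 1) (by lia)
    rw [hshift, ih]

lemma eq_zero_of_forall_pos_sum_mul_eq_zero {ι R : Type*} [Fintype ι] [Semiring R] [PartialOrder R]
    [IsStrictOrderedRing R] {d : ι → R} (h : ∀ x : ι → R, (∀ i, 0 < x i) → ∑ i, x i * d i = 0)
    (i : ι) : d i = 0 := by
  have hone : ∑ j, d j = 0 := by simpa using h 1 fun _ => one_pos
  have hsingle : 0 ≤ (Pi.single i 1 : ι → R) := Pi.single_nonneg.2 zero_le_one
  have hbump := h (1 + Pi.single i 1) fun j => add_pos_of_pos_of_nonneg one_pos (hsingle j)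
  simpa [add_mul, Finset.sum_add_distrib, Pi.single_apply, hone] using hbump

lemma FactorisedPALRMP.nextWeight_eq_prevWeight (h : FactorisedPALRMP u q f) (hq : q ≠ -1)
    (hq1 : q ≠ 1) {L : ℕ} [NeZero L] (hL : 2 ≤ L) {η : ZMod L → ℕ} (hη : 1 ≤ ∑ a, η a)
    (k : ZMod L) : nextWeight u η k = prevWeight u η k := by
  refine sub_eq_zero.1 (eq_zero_of_forall_pos_sum_mul_eq_zero
    (d := fun k => nextWeight u η k - prevWeight u η k) (fun x hx => ?_) k)
  have hbalance := sub_eq_zero.2 (h.2 L _ hL hη x hx η rfl)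
  rw [(h.exchangeBalance hq).inflow_sub_outflow hx] at hbalance
  have hweight : ∏ a, f (x a) (η a) ≠ 0 := (Finset.prod_pos fun a _ => h.1 _ _ (hx a)).ne'
  simpa [hweight, sub_ne_zero.2 hq1.symm] using hbalance

lemma FactorisedPALRMP.rate_eq (h : FactorisedPALRMP u q f) (hq : q ≠ -1) (hq1 : q ≠ 1)
    {m m' : ℕ} (hm : 1 ≤ m) (hm' : 1 ≤ m') (n : ℕ) : u m n = u m' n := by
  let η : ZMod 3 → ℕ := ![n, m, m']
  have hnext : IsNextOccupied η 0 1 := by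
    refine ⟨by decide, hm, fun i hi hlt => ?_⟩
    have hval : ((1 : ZMod 3) - 0).val = 1 := by decide
    lia
  have hprev : IsPrevOccupied η 0 2 := by
    refine ⟨by decide, hm', fun i hi hlt => ?_⟩
    have hval : ((0 : ZMod 3) - 2).val = 1 := by decide
    lia
  have hη : 1 ≤ ∑ a, η a :=
    hm.trans (Finset.single_le_sum_of_canonicallyOrdered (f := η) (Finset.mem_univ 1))
  calc u m n = nextWeight u η 0 := hnext.nextWeight_eq.symm
    _ = prevWeight u η 0 := h.nextWeight_eq_prevWeight hq hq1 (by norm_num) hη 0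
    _ = u m' n := hprev.prevWeight_eq

end Necessity

theorem palrmp_factorised_iff_general
    (q : ℝ) (hq : q ≠ -1) (hq1 : q ≠ 1)
    (u : ℕ → ℕ → ℝ) (hu : IsRate u) :
    ((∃ f : ℝ → ℕ → ℝ, FactorisedPALRMP u q f) ↔
      ∃ φ : ℕ → ℝ, (∀ n, 0 < φ n) ∧ ∀ m n : ℕ, 1 ≤ m → u m n = φ n) ∧
    (∀ φ : ℕ → ℝ, (∀ n, 0 < φ n) → (∀ m n : ℕ, 1 ≤ m → u m n = φ n) →
      FactorisedPALRMP u q (fun x n => x ^ n * ∏ i ∈ Finset.range n, φ i)) := by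
  refine ⟨⟨?_, ?_⟩, fun φ hφ hrate => factorisedPALRMP_pow_mul_prod q hφ hrate⟩
  · rintro ⟨f, hf⟩
    exact ⟨u 1, fun n => hu.1 1 n le_rfl, fun m n hm => hf.rate_eq hq hq1 hm le_rfl n⟩
  · rintro ⟨φ, hφ, hrate⟩
    exact ⟨_, factorisedPALRMP_pow_mul_prod q hφ hrate⟩

/-- for `q ≠ 1`, the stationary distribution corresponding to `u` in the
PALRMP is factorised iff `u (m, n) = φ n` for `m ≥ 1`; in that case the one-point
function `f (x, n) = x ^ n * ∏_{i=1}^{n} φ (i - 1)` works. -/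
theorem palrmp_factorised_iff
    (q : ℝ) (hq : 0 ≤ q) (hq1 : q ≠ 1)
    (u : ℕ → ℕ → ℝ) (hu : IsRate u) :
    ((∃ f : ℝ → ℕ → ℝ, FactorisedPALRMP u q f) ↔
      ∃ φ : ℕ → ℝ, (∀ n, 0 < φ n) ∧ ∀ m n : ℕ, 1 ≤ m → u m n = φ n) ∧
    (∀ φ : ℕ → ℝ, (∀ n, 0 < φ n) → (∀ m n : ℕ, 1 ≤ m → u m n = φ n) →
      FactorisedPALRMP u q (fun x n => x ^ n * ∏ i ∈ Finset.range n, φ i)) :=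
  palrmp_factorised_iff_general q (by linarith) hq1 u hu

end LRMP
end

section
/- Fix q ≥ 0 with q ≠ 1. The stationary distribution corresponding to a rate function u is factorised in the TALRMP (q = 0) if and only if the stationary distribution corresponding to u is factorised in the PALRMP with asymmetry parameter q; moreover the same one-point function works for both. -/
open scoped Classical

/-!
Reflecting the ring, `a ↦ -a`, exchanges clockwise and counterclockwise hops. Hence, writing
`D_q` for inflow minus outflow, `D_q = D_0 + q * D_0'`, where the prime denotes reflection of the
rate parameters, the distribution and the configuration. Reflecting this identity gives
`D_q' = D_0' + q * D_0`, and the two combine to `D_q - q * D_q' = (1 - q ^ 2) * D_0`. The class of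
factorised distributions with a given one-point function is closed under reflection, so for
`q ^ 2 ≠ 1` the master equations of all of them hold at `q` exactly when they hold at `0`.
-/

namespace LRMP

/-- The reflection `a ↦ -a` of the ring, acting on site-indexed data of any kind: configurations
as well as rate parameters. The distribution `π` is reflected by `π ∘ reflect`. -/
def reflect {L : ℕ} {α : Type*} (φ : ZMod L → α) : ZMod L → α :=
  fun a => φ (-a)

/-- The unnormalised factorised distribution with one-point function `f`, in the form in which
it appears in `FactorisedPALRMP`. -/
noncomputable def factorisedWeight {L : ℕ} [NeZero L] (f : ℝ → ℕ → ℝ) (x : ZMod L → ℝ)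
    (η : ZMod L → ℕ) : ℝ :=
  ∏ ℓ, f (x ℓ) (η ℓ)

theorem sum_sum_comp_neg {G M : Type*} [Fintype G] [InvolutiveNeg G] [AddCommMonoid M]
    (g : G → G → M) : ∑ a, ∑ b, g (-a) (-b) = ∑ a, ∑ b, g a b :=
  calc
    ∑ a, ∑ b, g (-a) (-b) = ∑ a, ∑ b, g (-a) b :=
      Finset.sum_congr rfl fun a _ => Equiv.sum_comp (Equiv.neg G) (g (-a))
    _ = ∑ a, ∑ b, g a b := Equiv.sum_comp (Equiv.neg G) fun a => ∑ b, g a b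

section Reflection

variable {L : ℕ}

@[simp]
theorem reflect_apply {α : Type*} (φ : ZMod L → α) (a : ZMod L) : reflect φ a = φ (-a) :=
  rfl

@[simp]
theorem reflect_reflect {α : Type*} (φ : ZMod L → α) : reflect (reflect φ) = φ :=
  funext fun a => congrArg φ (neg_neg a)

theorem sum_reflect {M : Type*} [NeZero L] [AddCommMonoid M] (φ : ZMod L → M) :
    ∑ a, reflect φ a = ∑ a, φ a :=
  Equiv.sum_comp (Equiv.neg (ZMod L)) φ

theorem factorisedWeight_comp_reflect [NeZero L] (f : ℝ → ℕ → ℝ) (x : ZMod L → ℝ) :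
    factorisedWeight f x ∘ reflect = factorisedWeight f (reflect x) := by
  funext η
  simp only [Function.comp_apply, factorisedWeight, reflect_apply]
  simpa only [Equiv.neg_apply, neg_neg] using
    Equiv.prod_comp (Equiv.neg (ZMod L)) fun ℓ => f (x (-ℓ)) (η ℓ)

theorem move_reflect (η : ZMod L → ℕ) (k ℓ : ZMod L) :
    move L (reflect η) (-k) (-ℓ) = reflect (move L η k ℓ) := by
  funext a
  simp only [move, reflect_apply, neg_eq_iff_eq_neg]

theorem rightClear_reflect (η : ZMod L → ℕ) (k ℓ : ZMod L) :
    RightClear L (reflect η) (-k) (-ℓ) ↔ LeftClear L η k ℓ := by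
  have distance : -ℓ - -k = k - ℓ := neg_sub_neg ℓ k
  have site (i : ℕ) : -(-k + (i : ZMod L)) = k - i := by ring
  simp only [RightClear, LeftClear, reflect_apply, distance, site]

end Reflection

section Currents

variable {L : ℕ} (u : ℕ → ℕ → ℝ) (x : ZMod L → ℝ) (q : ℝ)

theorem hopRate_eq_add_reflect (η : ZMod L → ℕ) (k ℓ : ZMod L) :
    hopRate L u x q η k ℓ =
      hopRate L u x 0 η k ℓ + q * hopRate L u (reflect x) 0 (reflect η) (-k) (-ℓ) := by
  simp only [hopRate, rightClear_reflect, reflect_apply, neg_neg, ne_eq, neg_inj, zero_mul,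
    ite_self, add_zero, mul_ite, mul_zero]

variable [NeZero L] (π : (ZMod L → ℕ) → ℝ) (η : ZMod L → ℕ)

theorem outflow_eq_add_reflect :
    outflow L u x q π η =
      outflow L u x 0 π η + q * outflow L u (reflect x) 0 (π ∘ reflect) (reflect η) := by
  simp only [outflow]
  rw [← sum_sum_comp_neg fun k ℓ =>
    (π ∘ reflect) (reflect η) * hopRate L u (reflect x) 0 (reflect η) k ℓ]
  simp only [Finset.mul_sum, ← Finset.sum_add_distrib]
  refine Finset.sum_congr rfl fun k _ => Finset.sum_congr rfl fun ℓ _ => ?_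
  rw [hopRate_eq_add_reflect, Function.comp_apply, reflect_reflect]
  ring

theorem inflow_eq_add_reflect :
    inflow L u x q π η =
      inflow L u x 0 π η + q * inflow L u (reflect x) 0 (π ∘ reflect) (reflect η) := by
  simp only [inflow]
  rw [← sum_sum_comp_neg fun k ℓ => if 1 ≤ reflect η ℓ then
    (π ∘ reflect) (move L (reflect η) ℓ k) *
      hopRate L u (reflect x) 0 (move L (reflect η) ℓ k) k ℓ else 0]
  simp only [Finset.mul_sum, ← Finset.sum_add_distrib]
  refine Finset.sum_congr rfl fun k _ => Finset.sum_congr rfl fun ℓ _ => ?_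
  rw [hopRate_eq_add_reflect, move_reflect, Function.comp_apply, reflect_reflect, reflect_apply,
    neg_neg]
  split_ifs <;> ring

end Currents

section Stationarity

variable {L N : ℕ} [NeZero L] {u : ℕ → ℕ → ℝ} {x : ZMod L → ℝ} {q : ℝ}
  {π : (ZMod L → ℕ) → ℝ}

theorem IsStationary.of_zero (h : IsStationary L N u x 0 π)
    (h_reflect : IsStationary L N u (reflect x) 0 (π ∘ reflect)) (q : ℝ) :
    IsStationary L N u x q π := by
  intro η hη
  rw [inflow_eq_add_reflect, outflow_eq_add_reflect, h η hη,
    h_reflect (reflect η) ((sum_reflect η).trans hη)]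

theorem IsStationary.zero_of_sq_ne_one (h : IsStationary L N u x q π)
    (h_reflect : IsStationary L N u (reflect x) q (π ∘ reflect)) (hq : q ^ 2 ≠ 1) :
    IsStationary L N u x 0 π := by
  intro η hη
  have balance := h η hη
  have balance_reflect := h_reflect (reflect η) ((sum_reflect η).trans hη)
  have reflect_twice : (π ∘ reflect) ∘ reflect = π := funext fun η => congrArg π (reflect_reflect η)
  rw [inflow_eq_add_reflect, outflow_eq_add_reflect] at balance balance_reflect
  rw [reflect_twice, reflect_reflect, reflect_reflect] at balance_reflect
  refine mul_left_cancel₀ (sub_ne_zero.mpr hq.symm) ?_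
  linear_combination balance - q * balance_reflect

theorem FactorisedPALRMP.isStationary_reflect {f : ℝ → ℕ → ℝ} (h : FactorisedPALRMP u q f)
    (hL : 2 ≤ L) (hN : 1 ≤ N) (hx : ∀ ℓ, 0 < x ℓ) :
    IsStationary L N u (reflect x) q (factorisedWeight f x ∘ reflect) := by
  rw [factorisedWeight_comp_reflect]
  exact h.2 L N hL hN (reflect x) fun ℓ => hx (-ℓ)

end Stationarity

theorem talrmp_iff_palrmp_general {q : ℝ} (hq : q ^ 2 ≠ 1) (u : ℕ → ℕ → ℝ) (f : ℝ → ℕ → ℝ) :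
    FactorisedPALRMP u 0 f ↔ FactorisedPALRMP u q f := by
  constructor <;> intro h <;> refine ⟨h.1, fun L N _ hL hN x hx => ?_⟩
  · exact (h.2 L N hL hN x hx).of_zero (h.isStationary_reflect hL hN hx) q
  · exact (h.2 L N hL hN x hx).zero_of_sq_ne_one (h.isStationary_reflect hL hN hx) hq

/-- for `q ≠ 1`, the stationary distribution corresponding to `u` is
factorised in the TALRMP (`q = 0`) iff it is factorised in the PALRMP with
asymmetry `q`, with the same one-point function working for both. -/
theorem talrmp_iff_palrmp
    (q : ℝ) (hq : 0 ≤ q) (hq1 : q ≠ 1)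
    (u : ℕ → ℕ → ℝ) (hu : IsRate u)
    (f : ℝ → ℕ → ℝ) :
    FactorisedPALRMP u 0 f ↔ FactorisedPALRMP u q f :=
  talrmp_iff_palrmp_general ((pow_eq_one_iff_of_nonneg hq two_ne_zero).not.mpr hq1) u f

end LRMP
end

section
/- Fix q ≥ 0 with q ≠ 1. The stationary distribution corresponding to a rate function u in the homogeneous PALRMP is factorised if and only if for all m, n ≥ 1: (i) u(m,n) = (u(1,m)/u(1,n−1))·u(m+1,n−1) + (u(m,1) − u(1,m)) − (u(n,1) − u(1,n)), and (ii) u(m,0) = u(n,0). In that case the one-point function f(n) = ∏_{i=1}^{n} u(1,i−1) works. -/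
open scoped Classical

/-!
For factorised weights, let `A m n` be the outgoing minus the incoming current through the hop from
a site with `m` particles to a site with `n`, divided by the weight of the configuration.
Stationarity says that, in every configuration, the sum of `A` over the clockwise hops plus `q`
times its sum over the counterclockwise hops vanishes. On two sites both sums agree, which makes `A`
antisymmetric; on any ring the two sums are then opposite, so for `q ≠ 1` each of them vanishes. On
three sites this forces `A m n = h m - h n` for `m, n ≥ 1` and makes `A m 0` constant for `m ≥ 1`.
Conversely, the sum of such an `A` telescopes along the occupied sites of any ring. Finally, since
`A 0 n` is constant for `n ≥ 1`, the ratio `f (n + 1) / f n` is a constant multiple of `u 1 n`, and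
substituting it into `A` turns `A m n = h m - h n` into a relation between rates only.
-/

namespace LRMP

variable {L : ℕ}

section Clear

variable [NeZero L] {η η' : ZMod L → ℕ} {k ℓ : ZMod L}

lemma rightClear_iff :
    RightClear L η k ℓ ↔ ∀ a ≠ k, (a - k).val < (ℓ - k).val → η a = 0 := by
  refine ⟨fun h a hak hlt => ?_, fun h i hi hlt => ?_⟩
  · simpa using h (a - k).val (ZMod.val_pos.2 (sub_ne_zero.2 hak)) hlt
  · have hival : (i : ZMod L).val = i := ZMod.val_cast_of_lt (hlt.trans (ZMod.val_lt _))
    have hi0 : (i : ZMod L) ≠ 0 := by rw [← ZMod.val_pos, hival]; exact hi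
    exact h _ (by simpa using hi0) (by simpa [hival] using hlt)

lemma rightClear_congr (h : ∀ a, a ≠ k → a ≠ ℓ → η a = η' a) :
    RightClear L η k ℓ ↔ RightClear L η' k ℓ := by
  simp only [rightClear_iff]
  refine forall₃_congr fun a hak hlt => ?_
  rw [h a hak (by rintro rfl; exact hlt.false)]

lemma leftClear_iff_rightClear : LeftClear L η k ℓ ↔ RightClear L η ℓ k := by
  have sub_eq_add : ∀ i ≤ (k - ℓ).val,
      k - (i : ZMod L) = ℓ + (((k - ℓ).val - i : ℕ) : ZMod L) := by
    intro i hi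
    rw [Nat.cast_sub hi, ZMod.natCast_zmod_val]
    ring
  refine ⟨fun h i hi hlt => ?_, fun h i hi hlt => ?_⟩
  · have := h ((k - ℓ).val - i) (by lia) (by lia)
    rwa [sub_eq_add _ (by lia), Nat.sub_sub_self hlt.le] at this
  · rw [sub_eq_add i hlt.le]
    exact h _ (by lia) (by lia)

lemma rightClear_comp_neg :
    RightClear L (fun a => η (-a)) (-k) (-ℓ) ↔ RightClear L η ℓ k := by
  rw [← leftClear_iff_rightClear (k := k)]
  have neg_site : ∀ i : ZMod L, -(-k + i) = k - i := fun i => by ring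
  simp only [RightClear, LeftClear, neg_sub_neg, neg_site]

lemma existsUnique_rightClear_occupied (h : ∃ ℓ, k ≠ ℓ ∧ η ℓ ≠ 0) :
    ∃! ℓ, (k ≠ ℓ ∧ RightClear L η k ℓ) ∧ η ℓ ≠ 0 := by
  obtain ⟨ℓ, ⟨hkℓ, hℓ⟩, hmin⟩ :=
    Set.exists_min_image {ℓ | k ≠ ℓ ∧ η ℓ ≠ 0} (fun ℓ => (ℓ - k).val) (Set.toFinite _) h
  refine ⟨ℓ, ⟨⟨hkℓ, rightClear_iff.2 fun a hak hlt => ?_⟩, hℓ⟩, ?_⟩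
  · by_contra ha
    exact (hmin a ⟨hak.symm, ha⟩).not_gt hlt
  · rintro b ⟨⟨hkb, hclear⟩, hb⟩
    have hle : (b - k).val ≤ (ℓ - k).val := by
      by_contra! hlt
      exact hℓ (rightClear_iff.1 hclear ℓ hkℓ.symm hlt)
    exact sub_left_injective (ZMod.val_injective L (hle.antisymm (hmin b ⟨hkb, hb⟩)))

end Clear

lemma rightClear_add_one (η : ZMod L → ℕ) (k : ZMod L) : RightClear L η k (k + 1) := by
  intro i hi hlt
  have hval : (1 : ZMod L).val ≤ 1 := by
    rw [ZMod.val_one_eq_one_mod]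
    exact Nat.mod_le 1 L
  rw [add_sub_cancel_left] at hlt
  lia

lemma rightClear_add_two (hL : 2 < L) (η : ZMod L → ℕ) (k : ZMod L) :
    RightClear L η k (k + 2) ↔ η (k + 1) = 0 := by
  have hval : (2 : ZMod L).val = 2 := by simpa using ZMod.val_cast_of_lt hL
  simp only [RightClear, add_sub_cancel_left, hval]
  refine ⟨fun h => by simpa using h 1 one_pos one_lt_two, fun h i hi hlt => ?_⟩
  obtain rfl : i = 1 := by lia
  simpa using h

/-- The indicator of the clockwise hop from `k` to `ℓ` being unobstructed in `η`. The
counterclockwise hop from `k` to `ℓ` is unobstructed when `openPath η ℓ k = 1`. -/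
noncomputable def openPath (η : ZMod L → ℕ) (k ℓ : ZMod L) : ℝ :=
  if k ≠ ℓ ∧ RightClear L η k ℓ then 1 else 0

/-- The sum of a two-site observable `A` over all unobstructed clockwise hops in `η`. -/
noncomputable def openSum [NeZero L] (A : ℕ → ℕ → ℝ) (η : ZMod L → ℕ) : ℝ :=
  ∑ k, ∑ ℓ, openPath η k ℓ * A (η k) (η ℓ)

lemma openPath_self (η : ZMod L → ℕ) (k : ZMod L) : openPath η k k = 0 := by
  simp [openPath]

section OpenPath

variable [NeZero L] {η η' : ZMod L → ℕ} {k ℓ : ZMod L}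

lemma openPath_congr (h : ∀ a, a ≠ k → a ≠ ℓ → η a = η' a) :
    openPath η k ℓ = openPath η' k ℓ := by
  simp only [openPath, rightClear_congr h]

lemma openPath_comp_neg (η : ZMod L → ℕ) (k ℓ : ZMod L) :
    openPath (fun a => η (-a)) (-k) (-ℓ) = openPath η ℓ k := by
  simp only [openPath, rightClear_comp_neg, ne_eq, neg_inj, eq_comm]

lemma sum_openPath_occupied_right (η : ZMod L → ℕ) (k : ZMod L) :
    ∑ ℓ, openPath η k ℓ * (if η ℓ = 0 then 0 else 1) =
      if ∃ ℓ, k ≠ ℓ ∧ η ℓ ≠ 0 then 1 else 0 := by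
  have hterm : ∀ ℓ, openPath η k ℓ * (if η ℓ = 0 then 0 else 1) =
      if (k ≠ ℓ ∧ RightClear L η k ℓ) ∧ η ℓ ≠ 0 then 1 else 0 := by
    intro ℓ
    rw [openPath, ite_and (_ ∧ _), ite_not, ite_mul, one_mul, zero_mul]
  simp only [hterm]
  split_ifs with h
  · obtain ⟨ℓ, hℓ, huniq⟩ := existsUnique_rightClear_occupied h
    rw [Fintype.sum_eq_single ℓ fun b hb => if_neg (mt (huniq b) hb), if_pos hℓ]
  · exact Finset.sum_eq_zero fun ℓ _ => if_neg fun hℓ => h ⟨ℓ, hℓ.1.1, hℓ.2⟩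

lemma sum_openPath_occupied_left (η : ZMod L → ℕ) (k : ZMod L) :
    ∑ ℓ, openPath η ℓ k * (if η ℓ = 0 then 0 else 1) =
      if ∃ ℓ, k ≠ ℓ ∧ η ℓ ≠ 0 then 1 else 0 := by
  have h := sum_openPath_occupied_right (fun a => η (-a)) (-k)
  rw [← Equiv.sum_comp (Equiv.neg _)] at h
  have hex : (∃ ℓ, -k ≠ ℓ ∧ η (-ℓ) ≠ 0) ↔ ∃ ℓ, k ≠ ℓ ∧ η ℓ ≠ 0 :=
    (Equiv.neg (ZMod L)).exists_congr fun ℓ => by rw [Equiv.neg_apply, ne_eq, neg_eq_iff_eq_neg]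
  simpa only [hex, Equiv.neg_apply, openPath_comp_neg, neg_neg] using h

end OpenPath

lemma openSum_eq_sum_add [NeZero L] (A : ℕ → ℕ → ℝ) (η : ZMod L → ℕ) :
    openSum A η = ∑ k, ∑ d, openPath η k (k + d) * A (η k) (η (k + d)) :=
  Finset.sum_congr rfl fun k _ => (Equiv.sum_comp (Equiv.addLeft k) _).symm

lemma openSum_two (A : ℕ → ℕ → ℝ) (η : ZMod 2 → ℕ) :
    openSum A η = A (η 0) (η 1) + A (η 1) (η 0) := by
  have sum_two : ∀ F : ZMod 2 → ℝ, ∑ k, F k = F 0 + F 1 := Fin.sum_univ_two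
  have openPath_add_one : ∀ k, openPath η k (k + 1) = 1 := fun k =>
    if_pos ⟨by simp, rightClear_add_one η k⟩
  have one_add_one : (1 : ZMod 2) + 1 = 0 := rfl
  rw [openSum_eq_sum_add]
  simp only [sum_two, add_zero, openPath_self, openPath_add_one, zero_mul, one_mul, zero_add,
    one_add_one]

lemma openSum_three (A : ℕ → ℕ → ℝ) (η : ZMod 3 → ℕ) :
    openSum A η =
      ∑ k, (A (η k) (η (k + 1)) + if η (k + 1) = 0 then A (η k) (η (k + 2)) else 0) := by
  have sum_three : ∀ F : ZMod 3 → ℝ, ∑ d, F d = F 0 + F 1 + F 2 := Fin.sum_univ_three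
  have two_ne_zero : (2 : ZMod 3) ≠ 0 := by decide
  rw [openSum_eq_sum_add]
  refine Finset.sum_congr rfl fun k _ => ?_
  rw [sum_three, add_zero, openPath_self, openPath, if_pos ⟨by simp, rightClear_add_one η k⟩,
    openPath]
  simp only [rightClear_add_two (by norm_num : 2 < 3), ne_eq, left_eq_add, two_ne_zero,
    not_false_eq_true, true_and, ite_mul, zero_mul, one_mul, zero_add]

/-- Vanishing of the sum of `A` over the unobstructed hops in every configuration, the
counterclockwise ones weighted by `q`. A counterclockwise hop from `k` to `ℓ` is counted through
`flip A` on the clockwise path from `ℓ` to `k`. -/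
def IsBalanced (q : ℝ) (A : ℕ → ℕ → ℝ) : Prop :=
  ∀ (L : ℕ) [NeZero L], 2 ≤ L → ∀ η : ZMod L → ℕ, openSum A η + q * openSum (flip A) η = 0

/-- `A` is the difference of the values of `h`, each counted only when the other site is
occupied, so that sums of `A` over neighbouring occupied sites telescope. -/
def IsTelescoping (h : ℕ → ℝ) (A : ℕ → ℕ → ℝ) : Prop :=
  ∀ m n, A m n = (if n = 0 then 0 else h m) - (if m = 0 then 0 else h n)

section Telescoping

variable {A : ℕ → ℕ → ℝ} {h : ℕ → ℝ} {q : ℝ}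

lemma IsTelescoping.flip (hA : IsTelescoping h A) : IsTelescoping (-h) (flip A) := by
  intro m n
  rw [_root_.flip, hA]
  split_ifs <;> simp only [Pi.neg_apply] <;> ring

lemma IsTelescoping.openSum_eq_zero [NeZero L] (hA : IsTelescoping h A) (η : ZMod L → ℕ) :
    openSum A η = 0 := by
  have hterm : ∀ k ℓ, openPath η k ℓ * A (η k) (η ℓ) =
      h (η k) * (openPath η k ℓ * (if η ℓ = 0 then 0 else 1)) -
        h (η ℓ) * (openPath η k ℓ * (if η k = 0 then 0 else 1)) := by
    intro k ℓ
    rw [hA]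
    split_ifs <;> ring
  simp only [openSum, hterm, Finset.sum_sub_distrib]
  rw [Finset.sum_comm (f := fun k ℓ => h (η ℓ) * _)]
  simp only [← Finset.mul_sum, sum_openPath_occupied_right, sum_openPath_occupied_left, sub_self]

lemma IsTelescoping.isBalanced (hA : IsTelescoping h A) (q : ℝ) : IsBalanced q A := by
  intro L _ _ η
  rw [hA.openSum_eq_zero, hA.flip.openSum_eq_zero, mul_zero, add_zero]

lemma IsBalanced.antisymm (hA : IsBalanced q A) (hq : q ≠ -1) (m n : ℕ) : A m n = -A n m := by
  obtain ⟨η, rfl, rfl⟩ : ∃ η : ZMod 2 → ℕ, η 0 = m ∧ η 1 = n := ⟨![m, n], rfl, rfl⟩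
  have h := hA 2 le_rfl η
  rw [openSum_two, openSum_two, flip, flip] at h
  have hprod : (q + 1) * (A (η 0) (η 1) + A (η 1) (η 0)) = 0 := by linear_combination h
  have hq' : q + 1 ≠ 0 := fun h => hq (eq_neg_of_add_eq_zero_left h)
  exact eq_neg_of_add_eq_zero_left ((mul_eq_zero.1 hprod).resolve_left hq')

lemma IsBalanced.openSum_eq_zero [NeZero L] (hA : IsBalanced q A) (hq : q ≠ -1) (hq1 : q ≠ 1)
    (hL : 2 ≤ L) (η : ZMod L → ℕ) : openSum A η = 0 := by
  have hflip : openSum (flip A) η = -openSum A η := by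
    have flip_apply : ∀ m n, flip A m n = -A m n := fun m n => hA.antisymm hq n m
    simp only [openSum, flip_apply, mul_neg, Finset.sum_neg_distrib]
  have h := hA L hL η
  rw [hflip] at h
  have hprod : (1 - q) * openSum A η = 0 := by linear_combination h
  exact (mul_eq_zero.1 hprod).resolve_left (sub_ne_zero.2 hq1.symm)

lemma IsBalanced.three_site_sum_eq_zero (hA : IsBalanced q A) (hq : q ≠ -1) (hq1 : q ≠ 1) {a b : ℕ}
    (ha : a ≠ 0) (hb : b ≠ 0) (c : ℕ) :
    A a b + A b c + A c a + (if c = 0 then A b a else 0) = 0 := by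
  obtain ⟨η, rfl, rfl, rfl⟩ : ∃ η : ZMod 3 → ℕ, η 0 = a ∧ η 1 = b ∧ η 2 = c :=
    ⟨![a, b, c], rfl, rfl, rfl⟩
  have h := hA.openSum_eq_zero hq hq1 (by norm_num) η
  have sum_three : ∀ F : ZMod 3 → ℝ, ∑ k, F k = F 0 + F 1 + F 2 := Fin.sum_univ_three
  have one_add_one : (1 : ZMod 3) + 1 = 2 := rfl
  have two_add_one : (2 : ZMod 3) + 1 = 0 := rfl
  have one_add_two : (1 : ZMod 3) + 2 = 0 := rfl
  rw [openSum_three, sum_three, one_add_one, two_add_one, one_add_two, zero_add, if_neg ha,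
    if_neg hb] at h
  linear_combination h

lemma IsBalanced.isTelescoping (hA : IsBalanced q A) (hq : q ≠ -1) (hq1 : q ≠ 1) :
    IsTelescoping (fun m => A m 1) A := by
  have occupied_empty : ∀ m ≠ 0, A m 0 = A 1 0 := by
    intro m hm
    have h := hA.three_site_sum_eq_zero hq hq1 hm one_ne_zero 0
    rw [if_pos rfl, hA.antisymm hq 1 m, hA.antisymm hq 0 m] at h
    linear_combination -h
  intro m n
  dsimp only
  split_ifs with hn hm hm
  · subst hn hm
    linarith [hA.antisymm hq 0 0]
  · subst hn
    rw [occupied_empty m hm, hA.antisymm hq 0 1]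
    ring
  · subst hm
    rw [hA.antisymm hq 0 n, hA.antisymm hq 0 1, occupied_empty n hn]
    ring
  · have h := hA.three_site_sum_eq_zero hq hq1 hm hn 1
    rw [if_neg one_ne_zero, hA.antisymm hq 1 m] at h
    linear_combination h

theorem isBalanced_iff_exists_isTelescoping (hq : q ≠ -1) (hq1 : q ≠ 1) :
    IsBalanced q A ↔ ∃ h, IsTelescoping h A :=
  ⟨fun hA => ⟨_, hA.isTelescoping hq hq1⟩, fun ⟨_, hA⟩ => hA.isBalanced q⟩

end Telescoping

/-- The outgoing minus the incoming current through an unobstructed clockwise hop from a site with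
`m` particles to a site with `n` particles, relative to the factorised weight of the configuration
with one-point function `f`. The incoming hop starts with `m + 1` and `n - 1` particles on the two
sites, so it exists only for `n ≥ 1`. -/
noncomputable def netCurrent (u : ℕ → ℕ → ℝ) (f : ℕ → ℝ) : ℕ → ℕ → ℝ
  | m, 0 => u m 0
  | m, n + 1 => u m (n + 1) - f (m + 1) * f n / (f m * f (n + 1)) * u (m + 1) n

section Balance

variable {u : ℕ → ℕ → ℝ} {f : ℕ → ℝ}

lemma prod_move_mul [NeZero L] {M : Type*} [CommMonoid M] (f : ℕ → M) (η : ZMod L → ℕ)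
    {k ℓ : ZMod L} (h : k ≠ ℓ) :
    (∏ a, f (move L η k ℓ a)) * (f (η k) * f (η ℓ)) =
      (∏ a, f (η a)) * (f (η k - 1) * f (η ℓ + 1)) := by
  have hcompl : ∏ a ∈ {k, ℓ}ᶜ, f (move L η k ℓ a) = ∏ a ∈ {k, ℓ}ᶜ, f (η a) := by
    refine Finset.prod_congr rfl fun a ha => ?_
    simp only [Finset.mem_compl, Finset.mem_insert, Finset.mem_singleton, not_or] at ha
    rw [move, if_neg ha.1, if_neg ha.2]
  rw [← Finset.prod_mul_prod_compl {k, ℓ}, ← Finset.prod_mul_prod_compl {k, ℓ} fun a => f (η a),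
    hcompl, Finset.prod_pair h, Finset.prod_pair h]
  simp only [move, if_true, if_neg h.symm]
  ac_rfl

lemma hopRate_eq [NeZero L] (hu : ∀ n, u 0 n = 0) (x : ZMod L → ℝ) (q : ℝ) (η : ZMod L → ℕ)
    (k ℓ : ZMod L) :
    hopRate L u x q η k ℓ =
      (openPath η k ℓ + q * openPath η ℓ k) * (x ℓ * u (η k) (η ℓ)) := by
  simp only [hopRate, openPath, leftClear_iff_rightClear, ne_comm (a := ℓ)]
  rcases Nat.eq_zero_or_pos (η k) with h0 | hpos
  · simp [h0, hu]
  · simp only [Nat.one_le_iff_ne_zero, hpos.ne', ne_eq, not_false_eq_true, true_and]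
    split_ifs <;> ring

lemma outgoing_sub_incoming [NeZero L] (hu : ∀ n, u 0 n = 0) (hf : ∀ n, f n ≠ 0) (q : ℝ)
    (η : ZMod L → ℕ) (k ℓ : ZMod L) :
    (∏ a, f (η a)) * hopRate L u (fun _ => 1) q η k ℓ -
        (if 1 ≤ η ℓ then
          (∏ a, f (move L η ℓ k a)) * hopRate L u (fun _ => 1) q (move L η ℓ k) k ℓ else 0) =
      (∏ a, f (η a)) *
        ((openPath η k ℓ + q * openPath η ℓ k) * netCurrent u f (η k) (η ℓ)) := by
  rcases eq_or_ne k ℓ with rfl | hkℓ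
  · simp [hopRate_eq hu, openPath_self]
  have hmove : ∀ a, a ≠ k → a ≠ ℓ → move L η ℓ k a = η a := fun a hak haℓ => by
    rw [move, if_neg haℓ, if_neg hak]
  have hk : move L η ℓ k k = η k + 1 := by simp [move, hkℓ]
  have hℓ : move L η ℓ k ℓ = η ℓ - 1 := by simp [move]
  rw [hopRate_eq hu, hopRate_eq hu, openPath_congr hmove,
    openPath_congr fun a haℓ hak => hmove a hak haℓ, hk, hℓ]
  have hprod := prod_move_mul f η hkℓ.symm
  rcases hn : η ℓ with _ | n
  · simp [netCurrent]
  · rw [hn, Nat.add_sub_cancel] at hprod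
    have hratio : ∏ a, f (move L η ℓ k a) =
        (∏ a, f (η a)) * (f (η k + 1) * f n / (f (η k) * f (n + 1))) := by
      rw [← mul_div_assoc, eq_div_iff (mul_ne_zero (hf _) (hf _))]
      linear_combination hprod
    rw [if_pos (Nat.le_add_left 1 n), hratio, netCurrent, Nat.add_sub_cancel]
    ring

lemma outflow_sub_inflow [NeZero L] (hu : ∀ n, u 0 n = 0) (hf : ∀ n, f n ≠ 0) (q : ℝ)
    (η : ZMod L → ℕ) :
    outflow L u (fun _ => 1) q (fun η => ∏ a, f (η a)) η -
        inflow L u (fun _ => 1) q (fun η => ∏ a, f (η a)) η =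
      (∏ a, f (η a)) *
        (openSum (netCurrent u f) η + q * openSum (flip (netCurrent u f)) η) := by
  have hflip : openSum (flip (netCurrent u f)) η =
      ∑ k, ∑ ℓ, openPath η ℓ k * netCurrent u f (η k) (η ℓ) := Finset.sum_comm
  rw [hflip, openSum, outflow, inflow]
  simp only [Finset.mul_sum, ← Finset.sum_add_distrib, ← Finset.sum_sub_distrib]
  refine Finset.sum_congr rfl fun k _ => Finset.sum_congr rfl fun ℓ _ => ?_
  rw [outgoing_sub_incoming hu hf]
  ring

theorem factorisedHomog_iff_isBalanced {q : ℝ} (hu : ∀ n, u 0 n = 0) :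
    FactorisedHomog u q f ↔ (∀ n, 0 < f n) ∧ IsBalanced q (netCurrent u f) := by
  refine and_congr_right fun hf => ?_
  have balance_iff : ∀ (L : ℕ) [NeZero L] (η : ZMod L → ℕ),
      inflow L u (fun _ => 1) q (fun η => ∏ a, f (η a)) η =
          outflow L u (fun _ => 1) q (fun η => ∏ a, f (η a)) η ↔
        openSum (netCurrent u f) η + q * openSum (flip (netCurrent u f)) η = 0 := by
    intro L _ η
    have hweight : ∏ a, f (η a) ≠ 0 := Finset.prod_ne_zero_iff.2 fun a _ => (hf _).ne'
    rw [eq_comm, ← sub_eq_zero, outflow_sub_inflow hu fun n => (hf n).ne']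
    exact mul_eq_zero_iff_left hweight
  refine ⟨fun H L _ hL η => ?_, fun H L N _ hL _ η _ => (balance_iff L η).2 (H L hL η)⟩
  rcases Nat.eq_zero_or_pos (∑ a, η a) with h0 | hpos
  · have hη : ∀ a, η a = 0 := by simpa using h0
    simp [openSum, flip, hη, netCurrent, hu]
  · exact (balance_iff L η).1 (H L _ hL hpos η rfl)

end Balance

section RateFunction

variable {u : ℕ → ℕ → ℝ} {f h : ℕ → ℝ}

lemma netCurrent_succ_of_ratio {c : ℝ} (hc : c ≠ 0) (hf : ∀ n, f n ≠ 0)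
    (hratio : ∀ n, f (n + 1) = c * u 1 n * f n) (m n : ℕ) :
    netCurrent u f m (n + 1) = u m (n + 1) - u 1 m / u 1 n * u (m + 1) n := by
  have hm := hf m
  have hn := hf n
  rw [netCurrent, hratio m, hratio n]
  congr 2
  field_simp

lemma IsTelescoping.rate_zero (hA : IsTelescoping h (netCurrent u f)) {m : ℕ} (hm : 1 ≤ m) :
    u m 0 = -h 0 := by
  simpa [netCurrent, Nat.one_le_iff_ne_zero.1 hm] using hA m 0

lemma IsTelescoping.onePoint_succ (hu : IsRate u) (hf : ∀ n, f n ≠ 0)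
    (hA : IsTelescoping h (netCurrent u f)) (n : ℕ) :
    f (n + 1) = f 1 / (f 0 * u 1 0) * u 1 n * f n := by
  have hempty : f 1 * f n / (f 0 * f (n + 1)) * u 1 n = u 1 0 := by
    have h0 := hA 0 (n + 1)
    rw [netCurrent, hu.2, if_neg n.succ_ne_zero, if_pos rfl] at h0
    rw [hA.rate_zero le_rfl]
    linear_combination -h0
  have hf0 := hf 0
  have hfn := hf (n + 1)
  have hu0 := (hu.1 1 0 le_rfl).ne'
  field_simp at hempty ⊢
  linear_combination -hempty

lemma IsTelescoping.rate_exchange (hu : IsRate u) (hf : ∀ n, f n ≠ 0)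
    (hA : IsTelescoping h (netCurrent u f)) {m n : ℕ} (hm : 1 ≤ m) (hn : 1 ≤ n) :
    u m n = u 1 m / u 1 (n - 1) * u (m + 1) (n - 1) + (u m 1 - u 1 m) - (u n 1 - u 1 n) := by
  have hu0 : u 1 0 ≠ 0 := (hu.1 1 0 le_rfl).ne'
  have hexchange : ∀ {m} n, 1 ≤ m →
      u m (n + 1) - u 1 m / u 1 n * u (m + 1) n = h m - h (n + 1) := by
    intro m n hm
    rw [← netCurrent_succ_of_ratio (div_ne_zero (hf 1) (mul_ne_zero (hf 0) hu0)) hf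
      (hA.onePoint_succ hu hf), hA, if_neg n.succ_ne_zero, if_neg (Nat.one_le_iff_ne_zero.1 hm)]
  have hone : ∀ {m}, 1 ≤ m → u m 1 - u 1 m = h m - h 1 := by
    intro m hm
    rw [← hexchange 0 hm, hA.rate_zero (Nat.le_add_left 1 m), ← hA.rate_zero le_rfl,
      div_mul_cancel₀ _ hu0]
  obtain ⟨n, rfl⟩ := Nat.exists_eq_add_of_le' hn
  rw [hone hm, hone hn, Nat.add_sub_cancel]
  linear_combination hexchange n hm

lemma isTelescoping_netCurrent_prod (hu : IsRate u)
    (hexchange : ∀ m n : ℕ, 1 ≤ m → 1 ≤ n →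
      u m n = u 1 m / u 1 (n - 1) * u (m + 1) (n - 1) + (u m 1 - u 1 m) - (u n 1 - u 1 n))
    (hzero : ∀ m n : ℕ, 1 ≤ m → 1 ≤ n → u m 0 = u n 0) :
    IsTelescoping (fun m => u m 1 - u 1 m)
      (netCurrent u fun n => ∏ i ∈ Finset.range n, u 1 i) := by
  have hu1 : ∀ n, u 1 n ≠ 0 := fun n => (hu.1 1 n le_rfl).ne'
  have hsucc := netCurrent_succ_of_ratio (u := u) (f := fun n => ∏ i ∈ Finset.range n, u 1 i)
    one_ne_zero (fun n => Finset.prod_ne_zero_iff.2 fun i _ => hu1 i)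
    fun n => by rw [one_mul, Finset.prod_range_succ_comm]
  rintro m (_ | n)
  · rcases Nat.eq_zero_or_pos m with rfl | hm
    · simp [netCurrent, hu.2]
    · simp [netCurrent, hu.2, hm.ne', hzero m 1 hm le_rfl]
  · rw [hsucc, if_neg n.succ_ne_zero]
    rcases Nat.eq_zero_or_pos m with rfl | hm
    · dsimp only
      rw [if_pos rfl, hu.2, hu.2, zero_add, div_mul_cancel₀ _ (hu1 n), sub_zero]
    · have h := hexchange m (n + 1) hm (Nat.le_add_left 1 n)
      rw [Nat.add_sub_cancel] at h
      rw [if_neg hm.ne']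
      linear_combination h

theorem factorisedHomog_prod (hu : IsRate u)
    (hexchange : ∀ m n : ℕ, 1 ≤ m → 1 ≤ n →
      u m n = u 1 m / u 1 (n - 1) * u (m + 1) (n - 1) + (u m 1 - u 1 m) - (u n 1 - u 1 n))
    (hzero : ∀ m n : ℕ, 1 ≤ m → 1 ≤ n → u m 0 = u n 0) (q : ℝ) :
    FactorisedHomog u q (fun n => ∏ i ∈ Finset.range n, u 1 i) :=
  (factorisedHomog_iff_isBalanced hu.2).2
    ⟨fun _ => Finset.prod_pos fun i _ => hu.1 1 i le_rfl,
      (isTelescoping_netCurrent_prod hu hexchange hzero).isBalanced q⟩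

end RateFunction

/-- for `q ≠ 1`, the stationary distribution corresponding to `u` in the
homogeneous PALRMP is factorised iff conditions (i) and (ii) hold; in that case the
one-point function `f n = ∏_{i=1}^{n} u (1, i-1)` works. -/
theorem hpalrmp_factorised_iff
    (q : ℝ) (hq : 0 ≤ q) (hq1 : q ≠ 1)
    (u : ℕ → ℕ → ℝ) (hu : IsRate u) :
    ((∃ f : ℕ → ℝ, FactorisedHomog u q f) ↔
      ((∀ m n : ℕ, 1 ≤ m → 1 ≤ n →
          u m n = u 1 m / u 1 (n - 1) * u (m + 1) (n - 1)
            + (u m 1 - u 1 m) - (u n 1 - u 1 n)) ∧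
        ∀ m n : ℕ, 1 ≤ m → 1 ≤ n → u m 0 = u n 0)) ∧
    ((∀ m n : ℕ, 1 ≤ m → 1 ≤ n →
        u m n = u 1 m / u 1 (n - 1) * u (m + 1) (n - 1)
          + (u m 1 - u 1 m) - (u n 1 - u 1 n)) →
      (∀ m n : ℕ, 1 ≤ m → 1 ≤ n → u m 0 = u n 0) →
      FactorisedHomog u q (fun n => ∏ i ∈ Finset.range n, u 1 i)) := by
  refine ⟨⟨fun ⟨f, hfact⟩ => ?_, fun ⟨hexchange, hzero⟩ =>
    ⟨_, factorisedHomog_prod hu hexchange hzero q⟩⟩, fun hexchange hzero =>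
    factorisedHomog_prod hu hexchange hzero q⟩
  obtain ⟨hf, hbalanced⟩ := (factorisedHomog_iff_isBalanced hu.2).1 hfact
  have hq' : q ≠ -1 := by linarith
  obtain ⟨h, hA⟩ := (isBalanced_iff_exists_isTelescoping hq' hq1).1 hbalanced
  exact ⟨fun m n hm hn => hA.rate_exchange hu (fun n => (hf n).ne') hm hn,
    fun m n hm hn => (hA.rate_zero hm).trans (hA.rate_zero hn).symm⟩

end LRMP
end
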